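/- With p₀(n) := 205n² − 160n + 32 and p₁(n) := 553n² − 440n + 88, the series identity ∑_{n≥1} (−1/2^10)^n · ((1)_n)^5 / ((1/2)_n)^5 · [ p₁(n)/n^7 − (3 H_n^{(2)} − H_{2n}^{(2)}) p₀(n)/n^5 ] = −2 ζ(5) holds, where ζ is the Riemann zeta function. -/

import Mathlib

/-- The rising factorial (Pochhammer symbol) `(a)ₙ = a(a+1)⋯(a+n-1)`. -/
noncomputable def risingFactorial (a : ℝ) (n : ℕ) : ℝ :=
  ∏ i ∈ Finset.range n, (a + i)

/-- The generalized harmonic number `H_n^{(s)} = ∑_{k=1}^n 1/k^s`. -/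
noncomputable def genHarmonic (s n : ℕ) : ℝ :=
  ∑ k ∈ Finset.range n, 1 / ((k : ℝ) + 1) ^ s

open Filter Topology
open scoped Nat

/-! ### Generalized harmonic numbers and rising factorials -/

theorem genHarmonic_succ (s n : ℕ) :
    genHarmonic s (n + 1) = genHarmonic s n + 1 / ((n : ℝ) + 1) ^ s := by
  simp [genHarmonic, Finset.sum_range_succ]

theorem genHarmonic_nonneg (s n : ℕ) : 0 ≤ genHarmonic s n :=
  Finset.sum_nonneg fun _ _ => by positivity

theorem genHarmonic_two_le (n : ℕ) : genHarmonic 2 n ≤ 2 := by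
  suffices h : genHarmonic 2 n ≤ 2 - 2 / (2 * (n : ℝ) + 1) from
    h.trans (sub_le_self _ (by positivity))
  induction n with
  | zero => simp [genHarmonic]
  | succ n ih =>
    rw [genHarmonic_succ]
    have key : 1 / ((n : ℝ) + 1) ^ 2 ≤ 2 / (2 * (n : ℝ) + 1) - 2 / (2 * (n : ℝ) + 3) := by
      rw [div_sub_div _ _ (by positivity) (by positivity),
        div_le_div_iff₀ (by positivity) (by positivity)]
      nlinarith
    push_cast
    rw [show 2 * ((n : ℝ) + 1) + 1 = 2 * (n : ℝ) + 3 by ring]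
    linarith

theorem risingFactorial_succ (a : ℝ) (n : ℕ) :
    risingFactorial a (n + 1) = risingFactorial a n * (a + n) :=
  Finset.prod_range_succ _ _

theorem risingFactorial_one (n : ℕ) : risingFactorial 1 n = n ! := by
  induction n with
  | zero => simp [risingFactorial]
  | succ n ih =>
    rw [risingFactorial_succ, ih, Nat.factorial_succ]
    push_cast
    ring

theorem factorial_two_mul_succ (n : ℕ) :
    ((2 * (n + 1))! : ℝ) = (2 * n + 2) * (2 * n + 1) * (2 * n)! := by
  rw [show 2 * (n + 1) = 2 * n + 1 + 1 by ring, Nat.factorial_succ, Nat.factorial_succ]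
  push_cast
  ring

theorem risingFactorial_half (n : ℕ) :
    risingFactorial (1 / 2) n = (2 * n)! / (4 ^ n * n !) := by
  induction n with
  | zero => simp [risingFactorial]
  | succ n ih =>
    rw [risingFactorial_succ, ih, factorial_two_mul_succ, Nat.factorial_succ]
    push_cast
    field_simp
    ring

/-! ### Factorial inequalities -/

theorem factorial_add_mul_factorial_two_mul_le (n j : ℕ) :
    (n + j)! * (2 * n)! ≤ n ! * (2 * n + j)! := by
  induction j with
  | zero => simp
  | succ j ih =>
    rw [← add_assoc, ← add_assoc, Nat.factorial_succ, Nat.factorial_succ]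
    calc (n + j + 1) * (n + j)! * (2 * n)! = (n + j + 1) * ((n + j)! * (2 * n)!) := by ring
      _ ≤ (2 * n + j + 1) * (n ! * (2 * n + j)!) := by gcongr; omega
      _ = n ! * ((2 * n + j + 1) * (2 * n + j)!) := by ring

theorem factorial_sq_div_factorial_two_mul_le (n : ℕ) :
    (n ! : ℝ) ^ 2 / (2 * n)! ≤ (1 / 2) ^ n := by
  induction n with
  | zero => simp
  | succ n ih =>
    rw [factorial_two_mul_succ, Nat.factorial_succ, pow_succ]
    push_cast
    calc (((n : ℝ) + 1) * n !) ^ 2 / ((2 * n + 2) * (2 * n + 1) * (2 * n)!)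
        = (n ! : ℝ) ^ 2 / (2 * n)! * (((n : ℝ) + 1) / (2 * (2 * n + 1))) := by
          field_simp
      _ ≤ (1 / 2) ^ n * (1 / 2) := by
          gcongr ?_ * ?_
          rw [div_le_div_iff₀ (by positivity) (by positivity)]
          linarith [(n.cast_nonneg : (0 : ℝ) ≤ n)]

/-! ### The Wilf–Zeilberger pair

The pair is the first-order part in `t` of the pair, coming from Dougall's `₅H₅` sum, which
accelerates `∑ 2 / (k (k ^ 2 - t))`. -/

/-- The hypergeometric factor common to both members of the pair. -/
noncomputable def wzWeight (n k : ℕ) : ℝ :=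
  (-1) ^ n * ((n ! : ℝ) ^ 6 / (2 * n)!) * (((n + k)! : ℝ) / (2 * n + k + 2)!) ^ 4

/-- The harmonic factor, the logarithmic derivative of the deformed weight. -/
noncomputable def wzHarmonic (n k : ℕ) : ℝ :=
  genHarmonic 2 (2 * n + k + 2) - genHarmonic 2 (n + k) - 2 * genHarmonic 2 n

/-- The member of the pair that is summed over `k`. -/
noncomputable def wzF (n k : ℕ) : ℝ :=
  wzWeight n k * (2 * n + k + 2) ^ 4 * (3 * n + 2 * k + 2) *
    (wzHarmonic n k - 1 / (2 * n + k + 2) ^ 2)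

/-- The numerator of the certificate of the undeformed pair. -/
noncomputable def certNum (n k : ℝ) : ℝ :=
  (77 + 558 * n + 1667 * n ^ 2 + 2628 * n ^ 3 + 2307 * n ^ 4 + 1070 * n ^ 5 + 205 * n ^ 6)
  + (254 + 1526 * n + 3628 * n ^ 2 + 4268 * n ^ 3 + 2486 * n ^ 4 + 574 * n ^ 5) * k
  + (344 + 1648 * n + 2928 * n ^ 2 + 2288 * n ^ 3 + 664 * n ^ 4) * k ^ 2
  + (248 + 888 * n + 1048 * n ^ 2 + 408 * n ^ 3) * k ^ 3
  + (101 + 240 * n + 141 * n ^ 2) * k ^ 4 + (22 + 26 * n) * k ^ 5 + 2 * k ^ 6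

/-- Minus the first-order term of the numerator of the certificate. -/
noncomputable def certNumDeriv (n k : ℝ) : ℝ :=
  (30 + 144 * n + 260 * n ^ 2 + 208 * n ^ 3 + 62 * n ^ 4)
  + (72 + 256 * n + 304 * n ^ 2 + 120 * n ^ 3) * k
  + (61 + 144 * n + 85 * n ^ 2) * k ^ 2 + (22 + 26 * n) * k ^ 3 + 3 * k ^ 4

/-- The companion of `wzF`. -/
noncomputable def wzG (n k : ℕ) : ℝ :=
  wzWeight n k * (certNum n k * wzHarmonic n k - certNumDeriv n k) / (2 * (2 * n + 1))

theorem wzWeight_succ_right (n k : ℕ) :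
    wzWeight n (k + 1) = wzWeight n k * (((n : ℝ) + k + 1) / (2 * n + k + 3)) ^ 4 := by
  rw [wzWeight, wzWeight, show n + (k + 1) = n + k + 1 by ring,
    show 2 * n + (k + 1) + 2 = 2 * n + k + 2 + 1 by ring,
    Nat.factorial_succ (n + k), Nat.factorial_succ (2 * n + k + 2)]
  push_cast
  rw [show (2 : ℝ) * n + k + 2 + 1 = 2 * n + k + 3 by ring]
  field_simp

theorem wzWeight_succ_left (n k : ℕ) :
    wzWeight (n + 1) k = -(wzWeight n k * (((n : ℝ) + 1) ^ 6 / ((2 * n + 2) * (2 * n + 1))) *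
      (((n : ℝ) + k + 1) / ((2 * n + k + 3) * (2 * n + k + 4))) ^ 4) := by
  rw [wzWeight, wzWeight, factorial_two_mul_succ, show n + 1 + k = n + k + 1 by ring,
    show 2 * (n + 1) + k + 2 = 2 * n + k + 2 + 1 + 1 by ring,
    Nat.factorial_succ n, Nat.factorial_succ (n + k), Nat.factorial_succ (2 * n + k + 2 + 1),
    Nat.factorial_succ (2 * n + k + 2), pow_succ]
  push_cast
  rw [show (2 : ℝ) * n + k + 2 + 1 + 1 = 2 * n + k + 4 by ring,
    show (2 : ℝ) * n + k + 2 + 1 = 2 * n + k + 3 by ring]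
  field_simp

theorem wzHarmonic_succ_right (n k : ℕ) :
    wzHarmonic n (k + 1) =
      wzHarmonic n k + 1 / (2 * (n : ℝ) + k + 3) ^ 2 - 1 / ((n : ℝ) + k + 1) ^ 2 := by
  rw [wzHarmonic, wzHarmonic, show n + (k + 1) = n + k + 1 by ring,
    show 2 * n + (k + 1) + 2 = 2 * n + k + 2 + 1 by ring,
    genHarmonic_succ 2 (n + k), genHarmonic_succ 2 (2 * n + k + 2)]
  push_cast
  ring

theorem wzHarmonic_succ_left (n k : ℕ) :
    wzHarmonic (n + 1) k =
      wzHarmonic n k + 1 / (2 * (n : ℝ) + k + 3) ^ 2 + 1 / (2 * (n : ℝ) + k + 4) ^ 2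
        - 1 / ((n : ℝ) + k + 1) ^ 2 - 2 / ((n : ℝ) + 1) ^ 2 := by
  rw [wzHarmonic, wzHarmonic, show n + 1 + k = n + k + 1 by ring,
    show 2 * (n + 1) + k + 2 = 2 * n + k + 2 + 1 + 1 by ring,
    genHarmonic_succ 2 n, genHarmonic_succ 2 (n + k), genHarmonic_succ 2 (2 * n + k + 2 + 1),
    genHarmonic_succ 2 (2 * n + k + 2)]
  push_cast
  ring

theorem wzF_succ_sub (n k : ℕ) : wzF (n + 1) k - wzF n k = wzG n (k + 1) - wzG n k := by
  simp only [wzF, wzG, wzWeight_succ_right, wzWeight_succ_left, wzHarmonic_succ_right,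
    wzHarmonic_succ_left, certNum, certNumDeriv]
  push_cast
  generalize wzWeight n k = w
  generalize wzHarmonic n k = h
  rw [show 2 * ((n : ℝ) + 1) + k + 2 = 2 * n + k + 4 by ring]
  field_simp
  ring

/-! ### Estimates -/

theorem abs_wzHarmonic_le (n k : ℕ) : |wzHarmonic n k| ≤ 6 := by
  have h₁ := genHarmonic_two_le (2 * n + k + 2)
  have h₂ := genHarmonic_two_le (n + k)
  have h₃ := genHarmonic_two_le n
  have h₄ := genHarmonic_nonneg 2 (2 * n + k + 2)
  have h₅ := genHarmonic_nonneg 2 (n + k)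
  have h₆ := genHarmonic_nonneg 2 n
  rw [wzHarmonic, abs_le]
  constructor <;> linarith

theorem abs_wzWeight_mul_le (n k : ℕ) :
    |wzWeight n k| * (2 * n + k + 2) ^ 4 ≤ (1 / 2) ^ n / ((n : ℝ) + k + 1) ^ 4 := by
  have hfac : (((n + k)! : ℝ) / (2 * n + k + 2)!) * (2 * n + k + 2) ≤
      (n ! : ℝ) / (2 * n)! / ((n : ℝ) + k + 1) := by
    have h := factorial_add_mul_factorial_two_mul_le n (k + 1)
    rw [← add_assoc, ← add_assoc, Nat.factorial_succ (n + k)] at h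
    have h' : ((n : ℝ) + k + 1) * (n + k)! * (2 * n)! ≤ n ! * (2 * n + k + 1)! := by
      exact_mod_cast h
    rw [show 2 * n + k + 2 = 2 * n + k + 1 + 1 by ring, Nat.factorial_succ (2 * n + k + 1)]
    push_cast
    rw [show (2 : ℝ) * n + k + 1 + 1 = 2 * n + k + 2 by ring, div_div,
      show ((n + k)! : ℝ) / ((2 * n + k + 2) * (2 * n + k + 1)!) * (2 * n + k + 2) =
        (n + k)! / (2 * n + k + 1)! by field_simp,
      div_le_div_iff₀ (by positivity) (by positivity)]
    linarith
  have hsq := factorial_sq_div_factorial_two_mul_le n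
  have hpow : ((n ! : ℝ) ^ 2 / (2 * n)!) ^ 5 ≤ (1 / 2) ^ n := by
    refine (pow_le_of_le_one (by positivity) ?_ (by norm_num)).trans hsq
    exact hsq.trans (pow_le_one₀ (by norm_num) (by norm_num))
  have habs : |wzWeight n k| =
      (n ! : ℝ) ^ 6 / (2 * n)! * (((n + k)! : ℝ) / (2 * n + k + 2)!) ^ 4 := by
    rw [wzWeight, abs_mul, abs_mul, abs_pow, abs_neg, abs_one, one_pow, one_mul,
      abs_of_nonneg (by positivity), abs_of_nonneg (by positivity)]
  calc |wzWeight n k| * (2 * n + k + 2) ^ 4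
      = (n ! : ℝ) ^ 6 / (2 * n)! *
          ((((n + k)! : ℝ) / (2 * n + k + 2)!) * (2 * n + k + 2)) ^ 4 := by
        rw [habs]; ring
    _ ≤ (n ! : ℝ) ^ 6 / (2 * n)! * ((n ! : ℝ) / (2 * n)! / ((n : ℝ) + k + 1)) ^ 4 := by
        gcongr
    _ = ((n ! : ℝ) ^ 2 / (2 * n)!) ^ 5 / ((n : ℝ) + k + 1) ^ 4 := by
        field_simp
    _ ≤ (1 / 2) ^ n / ((n : ℝ) + k + 1) ^ 4 := by gcongr

theorem abs_wzF_le (n k : ℕ) : |wzF n k| ≤ (1 / 2) ^ n * (21 / ((k : ℝ) + 1) ^ 2) := by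
  have hh : |wzHarmonic n k - 1 / (2 * n + k + 2) ^ 2| ≤ 7 := by
    have h₁ : 1 / (2 * (n : ℝ) + k + 2) ^ 2 ≤ 1 := by
      rw [div_le_one (by positivity)]
      exact one_le_pow₀
        (by linarith [(n.cast_nonneg : (0 : ℝ) ≤ n), (k.cast_nonneg : (0 : ℝ) ≤ k)])
    have h₂ : 0 ≤ 1 / (2 * (n : ℝ) + k + 2) ^ 2 := by positivity
    have h₃ := abs_le.1 (abs_wzHarmonic_le n k)
    rw [abs_le]
    constructor <;> linarith [h₃.1, h₃.2]
  have hn : (0 : ℝ) ≤ n := n.cast_nonneg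
  have hk : (0 : ℝ) ≤ k := k.cast_nonneg
  calc |wzF n k|
      = |wzWeight n k| * (2 * n + k + 2) ^ 4 * (3 * n + 2 * k + 2) *
          |wzHarmonic n k - 1 / (2 * n + k + 2) ^ 2| := by
        rw [wzF, abs_mul, abs_mul, abs_mul, abs_of_nonneg (by positivity : (0 : ℝ) ≤ _ ^ 4),
          abs_of_nonneg (by positivity : (0 : ℝ) ≤ 3 * n + 2 * k + 2)]
    _ ≤ (1 / 2) ^ n / ((n : ℝ) + k + 1) ^ 4 * (3 * (n + k + 1)) * 7 := by
        gcongr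
        · exact abs_wzWeight_mul_le n k
        · linarith
    _ = (1 / 2) ^ n * (21 / ((n : ℝ) + k + 1) ^ 3) := by
        field_simp
        ring
    _ ≤ (1 / 2) ^ n * (21 / ((k : ℝ) + 1) ^ 2) := by
        gcongr ?_ * (21 / ?_)
        calc ((k : ℝ) + 1) ^ 2 ≤ ((n : ℝ) + k + 1) ^ 2 := by gcongr; linarith
          _ ≤ ((n : ℝ) + k + 1) ^ 3 := pow_le_pow_right₀ (by linarith) (by norm_num)

theorem abs_wzG_le (n k : ℕ) : |wzG n k| ≤ 2000 * (1 / ((k : ℝ) + 1)) := by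
  have hn : (0 : ℝ) ≤ n := n.cast_nonneg
  have hk : (0 : ℝ) ≤ k := k.cast_nonneg
  set s : ℝ := n + k + 1 with hs
  have hs1 : 1 ≤ s := by rw [hs]; linarith
  have hw : |wzWeight n k| ≤ 1 / s ^ 8 := by
    have h₁ : |wzWeight n k| * s ^ 4 ≤ 1 / s ^ 4 := by
      calc |wzWeight n k| * s ^ 4 ≤ |wzWeight n k| * (2 * n + k + 2) ^ 4 := by
            gcongr
            rw [hs]
            linarith
        _ ≤ (1 / 2) ^ n / s ^ 4 := abs_wzWeight_mul_le n k
        _ ≤ 1 / s ^ 4 := by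
            gcongr
            exact pow_le_one₀ (by norm_num) (by norm_num)
    rw [le_div_iff₀ (by positivity)] at h₁ ⊢
    linarith
  have hc : certNum n k ≤ 205 * s ^ 6 := by
    rw [hs, certNum, ← sub_nonneg]
    ring_nf
    positivity
  have hc0 : 0 ≤ certNum n k := by
    rw [certNum]
    positivity
  have hd : certNumDeriv n k ≤ 62 * s ^ 6 := by
    have h₁ : certNumDeriv n k ≤ 62 * s ^ 4 := by
      rw [hs, certNumDeriv, ← sub_nonneg]
      ring_nf
      positivity
    exact h₁.trans (by gcongr; norm_num)
  have hd0 : 0 ≤ certNumDeriv n k := by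
    rw [certNumDeriv]
    positivity
  have hnum : |certNum n k * wzHarmonic n k - certNumDeriv n k| ≤ 2000 * s ^ 6 := by
    calc |certNum n k * wzHarmonic n k - certNumDeriv n k|
        ≤ |certNum n k * wzHarmonic n k| + |certNumDeriv n k| := abs_sub _ _
      _ = certNum n k * |wzHarmonic n k| + certNumDeriv n k := by
          rw [abs_mul, abs_of_nonneg hc0, abs_of_nonneg hd0]
      _ ≤ 205 * s ^ 6 * 6 + 62 * s ^ 6 := by
          gcongr
          exact abs_wzHarmonic_le n k
      _ ≤ 2000 * s ^ 6 := by linarith [pow_pos (zero_lt_one.trans_le hs1) 6]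
  calc |wzG n k|
      = |wzWeight n k| * |certNum n k * wzHarmonic n k - certNumDeriv n k| /
          (2 * (2 * n + 1)) := by
        rw [wzG, abs_div, abs_mul, abs_of_nonneg (by positivity : (0 : ℝ) ≤ 2 * (2 * n + 1))]
    _ ≤ |wzWeight n k| * |certNum n k * wzHarmonic n k - certNumDeriv n k| :=
        div_le_self (by positivity) (by linarith)
    _ ≤ 1 / s ^ 8 * (2000 * s ^ 6) := by gcongr
    _ = 2000 * (1 / s ^ 2) := by field_simp
    _ ≤ 2000 * (1 / ((k : ℝ) + 1)) := by
        gcongr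
        calc (k : ℝ) + 1 ≤ s := by rw [hs]; linarith
          _ ≤ s ^ 2 := le_self_pow₀ hs1 (by norm_num)

/-! ### Summation -/

theorem summable_const_div_succ_sq (c : ℝ) : Summable fun k : ℕ => c / ((k : ℝ) + 1) ^ 2 := by
  have h := (summable_nat_add_iff 1).2 (Real.summable_one_div_nat_pow.2 one_lt_two)
  simpa [div_eq_mul_inv] using h.mul_left c

theorem summable_wzF (n : ℕ) : Summable (wzF n) :=
  .of_norm_bounded ((summable_const_div_succ_sq 21).mul_left _) fun k => abs_wzF_le n k

theorem tendsto_wzG (n : ℕ) : Tendsto (wzG n) atTop (𝓝 0) := by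
  refine squeeze_zero_norm (fun k => abs_wzG_le n k) ?_
  simpa using (tendsto_one_div_add_atTop_nhds_zero_nat (𝕜 := ℝ)).const_mul 2000

theorem tsum_wzF_sub_tsum_succ (n : ℕ) : ∑' k, wzF n k - ∑' k, wzF (n + 1) k = wzG n 0 := by
  have h₁ := ((summable_wzF (n + 1)).hasSum.sub (summable_wzF n).hasSum).tendsto_sum_nat
  simp only [wzF_succ_sub, Finset.sum_range_sub] at h₁
  linarith [tendsto_nhds_unique h₁ ((tendsto_wzG n).sub_const (wzG n 0))]

theorem summable_tsum_wzF : Summable fun n => ∑' k, wzF n k := by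
  refine .of_norm_bounded
    (summable_geometric_two.mul_right (∑' k : ℕ, 21 / ((k : ℝ) + 1) ^ 2)) fun n => ?_
  rw [← tsum_mul_left]
  exact tsum_of_norm_bounded ((summable_const_div_succ_sq 21).mul_left _).hasSum (abs_wzF_le n)

theorem hasSum_wzG_zero : HasSum (fun n => wzG n 0) (∑' k, wzF 0 k) := by
  have hs := summable_tsum_wzF
  have hG : Summable fun n => wzG n 0 := by
    simpa only [tsum_wzF_sub_tsum_succ] using hs.sub ((summable_nat_add_iff 1).2 hs)
  rw [hG.hasSum_iff_tendsto_nat]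
  simp only [← tsum_wzF_sub_tsum_succ, Finset.sum_range_sub']
  simpa using hs.tendsto_atTop_zero.const_sub (∑' k, wzF 0 k)

theorem wzF_zero_left (k : ℕ) : wzF 0 k = 2 * (1 / ((k : ℝ) + 1) ^ 5) := by
  simp only [wzF, wzWeight, wzHarmonic, Nat.mul_zero, Nat.zero_add, genHarmonic_succ,
    Nat.factorial_succ]
  simp only [genHarmonic, Finset.sum_range_zero, Nat.factorial_zero]
  push_cast
  rw [show (k : ℝ) + 1 + 1 = k + 2 by ring]
  field_simp
  ring

theorem ofReal_tsum_wzF_zero : ((∑' k, wzF 0 k : ℝ) : ℂ) = 2 * riemannZeta 5 := by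
  have h := zeta_eq_tsum_one_div_nat_add_one_cpow (s := 5) (by norm_num)
  simp only [wzF_zero_left, tsum_mul_left]
  rw [h]
  push_cast
  congr 2
  ext k
  norm_cast

theorem wzG_zero_right (n : ℕ) :
    -wzG n 0 = (-1 / 2 ^ 10 : ℝ) ^ (n + 1) * (risingFactorial 1 (n + 1)) ^ 5 /
        (risingFactorial (1 / 2) (n + 1)) ^ 5 *
        ((553 * ((n : ℝ) + 1) ^ 2 - 440 * ((n : ℝ) + 1) + 88) / ((n : ℝ) + 1) ^ 7 -
          (3 * genHarmonic 2 (n + 1) - genHarmonic 2 (2 * (n + 1))) *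
            (205 * ((n : ℝ) + 1) ^ 2 - 160 * ((n : ℝ) + 1) + 32) / ((n : ℝ) + 1) ^ 5) := by
  have hpow : (-1 / 2 ^ 10 : ℝ) ^ (n + 1) = -(-1) ^ n / (4 ^ (n + 1)) ^ 5 := by
    rw [div_pow, pow_succ (-1 : ℝ), mul_neg_one, ← pow_mul, ← pow_mul,
      show (4 : ℝ) = 2 ^ 2 by norm_num, ← pow_mul]
    congr 2
    ring
  rw [hpow, risingFactorial_one, risingFactorial_half, wzG, wzWeight, wzHarmonic]
  simp only [Nat.add_zero]
  rw [show 2 * n + 2 = 2 * (n + 1) by ring, genHarmonic_succ 2 n, factorial_two_mul_succ,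
    Nat.factorial_succ n]
  generalize genHarmonic 2 (2 * (n + 1)) = a
  generalize genHarmonic 2 n = b
  simp only [certNum, certNumDeriv]
  push_cast
  field_simp
  ring

/-- With `p₀(n) = 205n²−160n+32` and `p₁(n) = 553n²−440n+88`:
`∑_{n≥1} (−1/2^10)^n (1)ₙ^5/(1/2)ₙ^5 [ p₁(n)/n^7 − (3H_n^{(2)} − H_{2n}^{(2)})p₀(n)/n^5 ]
  = −2ζ(5)`. -/
theorem wz_zeta5_series :
    ∑' n : ℕ, ((((-1 / 2 ^ 10 : ℝ) ^ (n + 1) * (risingFactorial 1 (n + 1)) ^ 5 /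
        (risingFactorial (1 / 2) (n + 1)) ^ 5 *
        ((553 * ((n : ℝ) + 1) ^ 2 - 440 * ((n : ℝ) + 1) + 88) / ((n : ℝ) + 1) ^ 7 -
          (3 * genHarmonic 2 (n + 1) - genHarmonic 2 (2 * (n + 1))) *
            (205 * ((n : ℝ) + 1) ^ 2 - 160 * ((n : ℝ) + 1) + 32) /
            ((n : ℝ) + 1) ^ 5) : ℝ)) : ℂ)
      = -2 * riemannZeta 5 := by
  simp only [← wzG_zero_right]
  rw [← Complex.ofReal_tsum, hasSum_wzG_zero.neg.tsum_eq, Complex.ofReal_neg,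
    ofReal_tsum_wzF_zero, neg_mul]
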